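/- For all integers 2 ≤ m ≤ μ with μ < s^{ν+1}, one has Z(H, μ, m) ≥ min{ (m−1)·q^{ν/4 − u/2} + q^{u − 1/2}(1 − q^{−1/2}) − 1 : u ∈ ℝ, log_q(m−1) − 1/2 ≤ u ≤ log_q(μ−1) + 1/2 }. -/

import Mathlib

/-- The set `S^i` of the description of the Weierstrass semigroup `H(Q_ν)` of the
ν-th function field of the Garcia–Stichtenoth tower over `𝔽_q`, `q = s^2`. -/
def Sset (s ν i : ℕ) : Set ℕ :=
  if i = 0 then {0}
  else {x | ∃ k, 1 ≤ k ∧ k ≤ s ^ i - s ^ (i - 1) ∧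
        x = s ^ ν - s ^ (ν - i + 1) + k * s ^ (ν - 2 * i + 1)}

/-- The set `S^∞ = {n : n ≥ c + 1}` where `c = s^ν - s^(ν/2)` is the conductor. -/
def Sinf (s ν : ℕ) : Set ℕ := {n | s ^ ν - s ^ (ν / 2) + 1 ≤ n}

/-- The Weierstrass semigroup `H = S^0 ∪ S^1 ∪ ⋯ ∪ S^(ν/2) ∪ S^∞ ⊆ ℕ`. -/
def Hsemi (s ν : ℕ) : Set ℕ := (⋃ i ≤ ν / 2, Sset s ν i) ∪ Sinf s ν

/-- The semigroup `H` viewed as a subset of `ℤ`. -/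
def HZ (s ν : ℕ) : Set ℤ := (fun n : ℕ => (n : ℤ)) '' Hsemi s ν

/-- `Z(H(Q_ν), μ, m)`: the minimum, over choices of integers
`-(μ-1) ≤ i_1 < i_2 < ⋯ < i_(m-1) ≤ -1`, of
`#{α ∈ ⋃_{v=1}^{m-1} (i_v + H) : α ∉ H}`. -/
noncomputable def Zval (s ν μ m : ℕ) : ℕ :=
  sInf {z : ℕ | ∃ i : ℕ → ℤ,
    (∀ v w, 1 ≤ v → v < w → w ≤ m - 1 → i v < i w) ∧
    (∀ v, 1 ≤ v → v ≤ m - 1 → -((μ : ℤ) - 1) ≤ i v ∧ i v ≤ -1) ∧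
    z = {α : ℤ | (∃ v : ℕ, 1 ≤ v ∧ v ≤ m - 1 ∧ ∃ h ∈ Hsemi s ν, α = i v + (h : ℤ)) ∧
          α ∉ HZ s ν}.ncard}

/-!
Let `d = -i_1` be the largest shift and write `ν = 2j + k` with `s^(k-1) ≤ d < s^(k+1)`. The first
`s^j` elements of `H`, namely `S^0 ∪ ⋯ ∪ S^j`, are exactly those up to `b = s^ν - s^(ν-j)`, and all
of them are multiples of `s^(k+1)`. The shifts are nonzero and pairwise distinct modulo `s^(k+1)`,
so these elements alone contribute `(m-1) s^j` values outside `H`, all at most `b`. Moreover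
`i_1 + H` contains everything above `c - d`, whereas `H` consists of multiples of `s` up to `c`;
hence the non-multiples of `s` in `(c - s^(k-1), c]`, an interval above `b`, are further values.
At `u = k/2` the second and third terms of the bound are at most their number.
-/

open scoped Pointwise

section Shifts

variable {A H I P : Set ℤ} {N b c l r t : ℤ}

lemma injOn_emod_Ico (a N : ℤ) : (Set.Ico a (a + N)).InjOn (· % N) := by
  intro x ⟨hax, hxN⟩ y ⟨hay, hyN⟩ hxy
  refine sub_eq_zero.1 (Int.eq_zero_of_abs_lt_dvd (Int.ModEq.dvd (Eq.symm hxy)) ?_)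
  rw [abs_lt]
  constructor <;> linarith

lemma ncard_add_of_injOn_emod (hA : A.InjOn (· % N)) (hP : ∀ p ∈ P, N ∣ p) :
    (A + P).ncard = A.ncard * P.ncard := by
  rw [← Set.add_image_prod, Set.InjOn.ncard_image, Set.ncard_prod]
  rintro ⟨a, p⟩ ⟨ha, hp⟩ ⟨a', p'⟩ ⟨ha', hp'⟩ (h : a + p = a' + p')
  have haa' : a = a' := hA ha ha' <| Int.emod_eq_emod_iff_emod_sub_eq_zero.2 <|
    Int.emod_eq_zero_of_dvd <| by
      rw [show a - a' = p' - p by linarith]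
      exact dvd_sub (hP p' hp') (hP p hp)
  exact Prod.ext haa' (add_left_cancel (haa' ▸ h))

lemma add_subset_add_diff_inter_Iic (hH : ∀ h ∈ H, h ≤ b → N ∣ h) (hP : P ⊆ H ∩ Set.Iic b)
    (hI : I ⊆ Set.Ioo (-N) 0) : I + P ⊆ ((I + H) \ H) ∩ Set.Iic b := by
  rintro _ ⟨a, ha, p, hp, rfl⟩
  obtain ⟨hpH, hpb : p ≤ b⟩ := hP hp
  obtain ⟨hNa, ha0⟩ := hI ha
  have hle : a + p ≤ b := by linarith
  refine ⟨⟨Set.add_mem_add ha hpH, fun hmem => ha0.ne ?_⟩, hle⟩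
  have hdvd : N ∣ a := (Int.dvd_add_left (hH p hpH hpb)).1 (hH _ hmem hle)
  exact Int.eq_zero_of_abs_lt_dvd hdvd (by rw [abs_lt]; constructor <;> linarith)

lemma setOf_not_dvd_subset_add_diff (hcH : Set.Ioi c ⊆ H) (hH : ∀ h ∈ H, h ≤ c → r ∣ h)
    (ht : t ∈ I) : {x | x ∈ Set.Ioc (c + t) c ∧ ¬ r ∣ x} ⊆ (I + H) \ H := by
  rintro x ⟨⟨hx, hxc⟩, hrx⟩
  refine ⟨⟨t, ht, x - t, hcH (Set.mem_Ioi.2 (by linarith)), add_sub_cancel _ _⟩, ?_⟩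
  exact fun hxH => hrx (hH x hxH hxc)

lemma ncard_Ioc_not_dvd (c : ℤ) (a : ℕ) {r : ℕ} (hr : 0 < r) :
    {x : ℤ | x ∈ Set.Ioc (c - (a * r : ℕ)) c ∧ ¬ (r : ℤ) ∣ x}.ncard = a * r - a := by
  have hdvd : ({x ∈ Finset.Ioc (c - (a * r : ℕ)) c | (r : ℤ) ∣ x}.card : ℤ) = a := by
    have hfloor : ((c - (a * r : ℕ) : ℤ) : ℚ) / (r : ℤ) = c / (r : ℤ) - a := by
      push_cast
      field_simp
    rw [Int.Ioc_filter_dvd_card _ _ (by exact_mod_cast hr), hfloor, Int.floor_sub_natCast]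
    omega
  have hadd := Finset.card_filter_add_card_filter_not
    (s := Finset.Ioc (c - (a * r : ℕ)) c) (fun x : ℤ => (r : ℤ) ∣ x)
  rw [Int.card_Ioc] at hadd
  rw [show {x : ℤ | x ∈ Set.Ioc (c - (a * r : ℕ)) c ∧ ¬ (r : ℤ) ∣ x} =
    ({x ∈ Finset.Ioc (c - (a * r : ℕ)) c | ¬ (r : ℤ) ∣ x} : Finset ℤ) by ext; simp,
    Set.ncard_coe_finset]
  omega

lemma finite_add_diff (hI : I ⊆ Set.Ici l) (hH : H ⊆ Set.Ici 0) (hcH : Set.Ioi c ⊆ H) :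
    ((I + H) \ H).Finite := by
  refine (Set.finite_Icc l c).subset ?_
  rintro _ ⟨⟨a, ha, h, hh, rfl⟩, hnot⟩
  have hla : l ≤ a := hI ha
  have h0 : 0 ≤ h := hH hh
  exact ⟨by dsimp only; linarith, not_lt.1 fun hlt => hnot (hcH hlt)⟩

end Shifts

section Semigroup

variable {s ν i j x : ℕ}

lemma lt_of_mem_Sset (hs : 0 < s) (hi : i ≠ 0) (hx : x ∈ Sset s ν i) :
    s ^ ν - s ^ (ν - i + 1) < x := by
  rw [Sset, if_neg hi] at hx
  obtain ⟨k, hk, -, rfl⟩ := hx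
  have : 0 < k * s ^ (ν - 2 * i + 1) := by positivity
  omega

lemma le_of_mem_Sset (hs : 0 < s) (hi : 2 * i ≤ ν) (hx : x ∈ Sset s ν i) :
    x ≤ s ^ ν - s ^ (ν - i) := by
  rcases i.eq_zero_or_pos with rfl | hpos
  · simp_all [Sset]
  rw [Sset, if_neg hpos.ne'] at hx
  obtain ⟨k, -, hk, rfl⟩ := hx
  have hmul : k * s ^ (ν - 2 * i + 1) ≤ s ^ (ν - i + 1) - s ^ (ν - i) := calc
    _ ≤ (s ^ i - s ^ (i - 1)) * s ^ (ν - 2 * i + 1) := Nat.mul_le_mul_right _ hk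
    _ = _ := by rw [Nat.sub_mul, ← pow_add, ← pow_add]; congr 2 <;> omega
  have hmono : s ^ (ν - i) ≤ s ^ (ν - i + 1) := Nat.pow_le_pow_right hs (by omega)
  have hmono' : s ^ (ν - i + 1) ≤ s ^ ν := Nat.pow_le_pow_right hs (by omega)
  omega

lemma dvd_of_mem_Sset (hi : 2 * i ≤ ν) (hx : x ∈ Sset s ν i) : s ^ (ν - 2 * i + 1) ∣ x := by
  rcases i.eq_zero_or_pos with rfl | hpos
  · simp_all [Sset]
  rw [Sset, if_neg hpos.ne'] at hx
  obtain ⟨k, -, -, rfl⟩ := hx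
  refine dvd_add (Nat.dvd_sub ?_ ?_) (dvd_mul_left _ _) <;> exact pow_dvd_pow s (by omega)

lemma ncard_Sset (hs : 0 < s) (hi : i ≠ 0) : (Sset s ν i).ncard = s ^ i - s ^ (i - 1) := by
  set f : ℕ → ℕ := fun k => s ^ ν - s ^ (ν - i + 1) + k * s ^ (ν - 2 * i + 1) with hf
  have hinj : Function.Injective f := fun a b hab =>
    Nat.eq_of_mul_eq_mul_right (by positivity) (Nat.add_left_cancel hab)
  have himage : Sset s ν i = f '' Set.Icc 1 (s ^ i - s ^ (i - 1)) := by
    ext x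
    simp only [Sset, if_neg hi, Set.mem_ofPred_eq, Set.mem_image, Set.mem_Icc, and_assoc, hf,
      eq_comm]
  rw [himage, Set.ncard_image_of_injective _ hinj, Set.ncard_Icc_nat, Nat.add_sub_cancel]

lemma le_of_mem_accumulate_Sset (hs : 0 < s) (hi : 2 * i ≤ ν)
    (hx : x ∈ Set.accumulate (Sset s ν) i) : x ≤ s ^ ν - s ^ (ν - i) := by
  obtain ⟨j, hji, hxj⟩ := Set.mem_accumulate.1 hx
  have hxle := le_of_mem_Sset hs (by omega) hxj
  have hmono : s ^ (ν - i) ≤ s ^ (ν - j) := Nat.pow_le_pow_right hs (by omega)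
  omega

lemma dvd_of_mem_accumulate_Sset (hi : 2 * i ≤ ν) (hx : x ∈ Set.accumulate (Sset s ν) i) :
    s ^ (ν - 2 * i + 1) ∣ x := by
  obtain ⟨j, hji, hxj⟩ := Set.mem_accumulate.1 hx
  exact (pow_dvd_pow s (by omega)).trans (dvd_of_mem_Sset (by omega) hxj)

lemma ncard_accumulate_Sset (hs : 0 < s) (hi : 2 * i ≤ ν) :
    (Set.accumulate (Sset s ν) i).ncard = s ^ i := by
  induction i with
  | zero => simp [Sset]
  | succ i ih =>
    have hdisj : Disjoint (Set.accumulate (Sset s ν) i) (Sset s ν (i + 1)) := by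
      refine Set.disjoint_left.2 fun x hx hx' => ?_
      have hle := le_of_mem_accumulate_Sset hs (by omega) hx
      have hlt := lt_of_mem_Sset hs i.succ_ne_zero hx'
      rw [show ν - (i + 1) + 1 = ν - i by omega] at hlt
      omega
    have hmono : s ^ i ≤ s ^ (i + 1) := Nat.pow_le_pow_right hs (by omega)
    rw [Set.accumulate_succ, Set.ncard_union_eq hdisj
      ((Set.finite_Iic _).subset fun x => le_of_mem_accumulate_Sset hs (by omega))
      ((Set.finite_Iic _).subset fun x => le_of_mem_Sset hs hi),
      ih (by omega), ncard_Sset hs i.succ_ne_zero]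
    exact Nat.add_sub_cancel' hmono

lemma mem_accumulate_Sset_of_mem_Hsemi (hs : 0 < s) (hi : 2 * i ≤ ν) (hx : x ∈ Hsemi s ν)
    (hle : x ≤ s ^ ν - s ^ (ν - i)) : x ∈ Set.accumulate (Sset s ν) i := by
  rcases hx with hx | (hx : s ^ ν - s ^ (ν / 2) + 1 ≤ x)
  · obtain ⟨j, hj, hxj⟩ := Set.mem_accumulate.1 hx
    refine Set.mem_accumulate.2 ⟨j, not_lt.1 fun hij => ?_, hxj⟩
    have hlt := lt_of_mem_Sset hs (by omega) hxj
    have hmono : s ^ (ν - j + 1) ≤ s ^ (ν - i) := Nat.pow_le_pow_right hs (by omega)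
    omega
  · have hmono : s ^ (ν / 2) ≤ s ^ (ν - i) := Nat.pow_le_pow_right hs (by omega)
    omega

lemma dvd_of_mem_Hsemi_of_le (hx : x ∈ Hsemi s ν) (hle : x ≤ s ^ ν - s ^ (ν / 2)) : s ∣ x := by
  rcases hx with hx | (hx : s ^ ν - s ^ (ν / 2) + 1 ≤ x)
  · exact (dvd_pow_self s (Nat.succ_ne_zero _)).trans (dvd_of_mem_accumulate_Sset (by omega) hx)
  · omega

lemma HZ_subset_Ici (s ν : ℕ) : HZ s ν ⊆ Set.Ici 0 := by
  rintro _ ⟨h, -, rfl⟩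
  exact Int.natCast_nonneg h

lemma Ioi_subset_HZ (s ν : ℕ) : Set.Ioi ((s ^ ν - s ^ (ν / 2) : ℕ) : ℤ) ⊆ HZ s ν := by
  intro z (hz : ((s ^ ν - s ^ (ν / 2) : ℕ) : ℤ) < z)
  lift z to ℕ using by omega
  exact ⟨z, Or.inr (Int.ofNat_lt.1 hz), rfl⟩

end Semigroup

section Count

variable {s j k d : ℕ} {I : Set ℤ}

lemma exists_subset_HZ_ncard_eq_pow (hs : 0 < s) (j k : ℕ) :
    ∃ P ⊆ HZ s (2 * j + k) ∩ Set.Iic ((s ^ (2 * j + k) - s ^ (j + k) : ℕ) : ℤ),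
      P.ncard = s ^ j := by
  refine ⟨Nat.cast '' Set.accumulate (Sset s (2 * j + k)) j, ?_, ?_⟩
  · rintro _ ⟨p, hp, rfl⟩
    have hle := le_of_mem_accumulate_Sset hs (by omega) hp
    rw [show 2 * j + k - j = j + k by omega] at hle
    refine ⟨⟨p, Or.inl ?_, rfl⟩, Int.ofNat_le.2 hle⟩
    exact Set.monotone_accumulate (by omega : j ≤ (2 * j + k) / 2) hp
  · rw [Set.ncard_image_of_injective _ Nat.cast_injective, ncard_accumulate_Sset hs (by omega)]

lemma dvd_of_mem_HZ_of_le (hs : 0 < s) {h : ℤ} (hh : h ∈ HZ s (2 * j + k))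
    (hle : h ≤ (s ^ (2 * j + k) - s ^ (j + k) : ℕ)) : ((s ^ (k + 1) : ℕ) : ℤ) ∣ h := by
  obtain ⟨x, hx, rfl⟩ := hh
  rw [show j + k = 2 * j + k - j by omega] at hle
  have hdvd := dvd_of_mem_accumulate_Sset (by omega)
    (mem_accumulate_Sset_of_mem_Hsemi hs (by omega) hx (Int.ofNat_le.1 hle))
  rw [show 2 * j + k - 2 * j = k by omega] at hdvd
  exact Int.natCast_dvd_natCast.2 hdvd

lemma exists_subset_add_HZ_diff_Iic (hs : 0 < s) (hI : I ⊆ Set.Ico (-d : ℤ) 0)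
    (hd : d < s ^ (k + 1)) (j : ℕ) :
    ∃ A ⊆ ((I + HZ s (2 * j + k)) \ HZ s (2 * j + k)) ∩
        Set.Iic ((s ^ (2 * j + k) - s ^ (j + k) : ℕ) : ℤ),
      A.ncard = I.ncard * s ^ j := by
  obtain ⟨P, hP, hPcard⟩ := exists_subset_HZ_ncard_eq_pow hs j k
  have hdvd : ∀ h ∈ HZ s (2 * j + k), h ≤ ((s ^ (2 * j + k) - s ^ (j + k) : ℕ) : ℤ) →
      ((s ^ (k + 1) : ℕ) : ℤ) ∣ h := fun h hh => dvd_of_mem_HZ_of_le hs hh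
  have hIioo : I ⊆ Set.Ioo (-(s ^ (k + 1) : ℕ) : ℤ) 0 := fun a ha =>
    ⟨(neg_lt_neg (Int.ofNat_lt.2 hd)).trans_le (hI ha).1, (hI ha).2⟩
  have hinj : I.InjOn (· % ((s ^ (k + 1) : ℕ) : ℤ)) :=
    (injOn_emod_Ico (-(s ^ (k + 1) : ℕ) : ℤ) (s ^ (k + 1) : ℕ)).mono <| by
      rw [neg_add_cancel]
      exact hIioo.trans Set.Ioo_subset_Ico_self
  refine ⟨I + P, add_subset_add_diff_inter_Iic hdvd hP hIioo, ?_⟩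
  rw [ncard_add_of_injOn_emod hinj fun p hp => hdvd p (hP hp).1 (hP hp).2, hPcard]

lemma pow_add_pow_le_pow_add (hs : 2 ≤ s) (hk : 2 ≤ k) (j : ℕ) :
    s ^ ((2 * j + k) / 2) + s ^ (k - 1) ≤ s ^ (j + k) := calc
  _ ≤ s ^ (j + k - 1) + s ^ (j + k - 1) := by
    gcongr <;> omega
  _ = 2 * s ^ (j + k - 1) := (two_mul _).symm
  _ ≤ s * s ^ (j + k - 1) := by gcongr
  _ = s ^ (j + k) := by rw [← pow_succ']; congr 1; omega

-- For `k ≤ 1` the truncated exponents `k - 1` and `k - 2` agree, and `G` is empty.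
lemma exists_subset_add_HZ_diff_Ioi (hs : 2 ≤ s) (hdI : (-d : ℤ) ∈ I)
    (hd : s ^ (k - 1) ≤ d) (j : ℕ) :
    ∃ G ⊆ ((I + HZ s (2 * j + k)) \ HZ s (2 * j + k)) ∩
        Set.Ioi ((s ^ (2 * j + k) - s ^ (j + k) : ℕ) : ℤ),
      G.ncard = s ^ (k - 1) - s ^ (k - 2) := by
  rcases Nat.lt_or_ge k 2 with hk | hk
  · exact ⟨∅, Set.empty_subset _, by
      rw [Set.ncard_empty, show k - 1 = k - 2 by omega, Nat.sub_self]⟩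
  set c := s ^ (2 * j + k) - s ^ ((2 * j + k) / 2)
  have hpow : s ^ (k - 2) * s = s ^ (k - 1) := by rw [← pow_succ]; congr 1; omega
  have hdvd : ∀ h ∈ HZ s (2 * j + k), h ≤ (c : ℤ) → (s : ℤ) ∣ h := by
    rintro _ ⟨x, hx, rfl⟩ hle
    exact Int.natCast_dvd_natCast.2 (dvd_of_mem_Hsemi_of_le hx (Int.ofNat_le.1 hle))
  refine ⟨{x | x ∈ Set.Ioc ((c : ℤ) - (s ^ (k - 2) * s : ℕ)) c ∧ ¬ (s : ℤ) ∣ x},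
    fun x hx => ⟨?_, ?_⟩, by rw [ncard_Ioc_not_dvd _ _ (by omega), hpow]⟩
  · refine setOf_not_dvd_subset_add_diff (Ioi_subset_HZ s _) hdvd hdI
      ⟨⟨lt_of_le_of_lt ?_ hx.1.1, hx.1.2⟩, hx.2⟩
    rw [hpow]
    omega
  · have hgap := pow_add_pow_le_pow_add hs hk j
    have hle : s ^ (j + k) ≤ s ^ (2 * j + k) := Nat.pow_le_pow_right (by omega) (by omega)
    refine lt_of_le_of_lt ?_ hx.1.1
    rw [hpow]
    omega

theorem le_ncard_add_HZ_diff (hs : 2 ≤ s) (hI : I ⊆ Set.Ico (-d : ℤ) 0) (hdI : (-d : ℤ) ∈ I)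
    (hlo : s ^ (k - 1) ≤ d) (hhi : d < s ^ (k + 1)) (j : ℕ) :
    I.ncard * s ^ j + (s ^ (k - 1) - s ^ (k - 2)) ≤
      ((I + HZ s (2 * j + k)) \ HZ s (2 * j + k)).ncard := by
  obtain ⟨A, hA, hAcard⟩ := exists_subset_add_HZ_diff_Iic (by omega) hI hhi j
  obtain ⟨G, hG, hGcard⟩ := exists_subset_add_HZ_diff_Ioi hs hdI hlo j
  have hfin : ((I + HZ s (2 * j + k)) \ HZ s (2 * j + k)).Finite :=
    finite_add_diff (fun a ha => (hI ha).1) (HZ_subset_Ici s _) (Ioi_subset_HZ s _)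
  have hAsub := hA.trans Set.inter_subset_left
  have hGsub := hG.trans Set.inter_subset_left
  have hdisj : Disjoint A G := (Set.Iic_disjoint_Ioi le_rfl).mono
    (hA.trans Set.inter_subset_right) (hG.trans Set.inter_subset_right)
  rw [← hAcard, ← hGcard, ← Set.ncard_union_eq hdisj (hfin.subset hAsub) (hfin.subset hGsub)]
  exact Set.ncard_le_ncard (Set.union_subset hAsub hGsub) hfin

end Count

section Parameters

lemma exists_pow_le_lt_pow {s ν d : ℕ} (hs : 2 ≤ s) (hd : d ≠ 0) (hlt : d < s ^ (ν + 1)) :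
    ∃ j k, 2 * j + k = ν ∧ s ^ (k - 1) ≤ d ∧ d < s ^ (k + 1) := by
  have hlog : Nat.log s d < ν + 1 := Nat.log_lt_of_lt_pow hd hlt
  refine ⟨(ν - Nat.log s d) / 2, ν - 2 * ((ν - Nat.log s d) / 2), by omega, ?_, ?_⟩
  · exact (Nat.pow_le_pow_right (by omega) (by omega)).trans (Nat.pow_log_le_self s hd)
  · exact (Nat.lt_pow_succ_log_self hs d).trans_le (Nat.pow_le_pow_right (by omega) (by omega))

lemma exists_neg_natCast_mem_subset_Ico {I : Set ℤ} {l : ℤ} (hI : I ⊆ Set.Ico l 0)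
    (hne : I.Nonempty) : ∃ d : ℕ, (-d : ℤ) ∈ I ∧ I ⊆ Set.Ico (-d : ℤ) 0 := by
  obtain ⟨t, htI, hmin⟩ := Set.exists_min_image I id ((Set.finite_Ico l 0).subset hI) hne
  have ht0 : t < 0 := (hI htI).2
  have habs : -(t.natAbs : ℤ) = t := by omega
  exact ⟨t.natAbs, habs.symm ▸ htI, fun a ha => ⟨habs.symm ▸ hmin a ha, (hI ha).2⟩⟩

lemma ncard_le_of_subset_Ico_neg {I : Set ℤ} {d : ℕ} (hI : I ⊆ Set.Ico (-d : ℤ) 0) :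
    I.ncard ≤ d := calc
  I.ncard ≤ (Finset.Ico (-d : ℤ) 0 : Set ℤ).ncard :=
    Set.ncard_le_ncard (by rwa [Finset.coe_Ico]) (Finset.finite_toSet _)
  _ = d := by rw [Set.ncard_coe_finset, Int.card_Ico]; omega

lemma exists_ncard_add_HZ_diff_eq_Zval (s ν : ℕ) {m μ : ℕ} (hmμ : m ≤ μ) :
    ∃ I ⊆ Set.Ico (1 - μ : ℤ) 0, I.ncard = m - 1 ∧
      ((I + HZ s ν) \ HZ s ν).ncard = Zval s ν μ m := by
  obtain ⟨i, hmono, hbound, hZ⟩ := Nat.sInf_mem (s := {z : ℕ | ∃ i : ℕ → ℤ,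
    (∀ v w, 1 ≤ v → v < w → w ≤ m - 1 → i v < i w) ∧
    (∀ v, 1 ≤ v → v ≤ m - 1 → -((μ : ℤ) - 1) ≤ i v ∧ i v ≤ -1) ∧
    z = {α : ℤ | (∃ v : ℕ, 1 ≤ v ∧ v ≤ m - 1 ∧ ∃ h ∈ Hsemi s ν, α = i v + (h : ℤ)) ∧
          α ∉ HZ s ν}.ncard})
    ⟨_, fun v => v - m, fun v w _ _ _ => by dsimp only; omega,
      fun v _ _ => by dsimp only; omega, rfl⟩
  have hstrict : StrictMonoOn i (Set.Icc 1 (m - 1)) :=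
    fun v hv w hw hvw => hmono v w hv.1 hvw hw.2
  refine ⟨i '' Set.Icc 1 (m - 1), ?_, ?_, ?_⟩
  · rintro _ ⟨v, hv, rfl⟩
    have := hbound v hv.1 hv.2
    exact ⟨by omega, by omega⟩
  · rw [hstrict.injOn.ncard_image, Set.ncard_Icc_nat, Nat.add_sub_cancel]
  · rw [Zval, hZ]
    congr 1
    ext α
    simp only [HZ, Set.mem_sdiff, Set.mem_add, Set.exists_mem_image, Set.mem_Icc, and_assoc,
      Set.mem_ofPred_eq, eq_comm]

end Parameters

section RealBounds

variable {s M x : ℝ} {k : ℕ}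

/-- The function of `u` minimised in the bound for `Z(H, μ, m)`, with `q = s ^ 2` and
`M = m - 1`. -/
noncomputable def boundTerm (s : ℝ) (ν : ℕ) (M u : ℝ) : ℝ :=
  M * (s ^ 2) ^ ((ν : ℝ) / 4 - u / 2) +
    (s ^ 2) ^ (u - 1 / 2) * (1 - (s ^ 2) ^ (-(1 : ℝ) / 2)) - 1

lemma boundTerm_eq (hs : 0 ≤ s) (ν : ℕ) (M u : ℝ) :
    boundTerm s ν M u = M * s ^ ((ν : ℝ) / 2 - u) + s ^ (2 * u - 1) * (1 - s⁻¹) - 1 := by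
  have hsq (x : ℝ) : (s ^ 2) ^ x = s ^ (2 * x) := by rw [Real.rpow_mul hs, Real.rpow_two]
  simp only [boundTerm, hsq, ← Real.rpow_neg_one]
  ring_nf

lemma neg_one_le_boundTerm (hs : 1 ≤ s) (hM : 0 ≤ M) (ν : ℕ) (u : ℝ) :
    -1 ≤ boundTerm s ν M u := by
  rw [boundTerm_eq (by positivity)]
  have hinv : 0 ≤ 1 - s⁻¹ := sub_nonneg.2 (inv_le_one_of_one_le₀ hs)
  have : 0 ≤ M * s ^ ((ν : ℝ) / 2 - u) + s ^ (2 * u - 1) * (1 - s⁻¹) := by positivity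
  linarith

lemma boundTerm_half_le {s : ℕ} (hs : 1 ≤ s) (M : ℝ) (j k : ℕ) :
    boundTerm s (2 * j + k) M (k / 2) ≤
      M * (s : ℝ) ^ j + (s ^ (k - 1) - s ^ (k - 2) : ℕ) := by
  have hs' : (1 : ℝ) ≤ s := Nat.one_le_cast.2 hs
  rw [boundTerm_eq (by positivity), ← Real.rpow_natCast _ j,
    show ((2 * j + k : ℕ) : ℝ) / 2 - k / 2 = j by push_cast; ring,
    show 2 * ((k : ℝ) / 2) - 1 = k - 1 by ring, add_sub_assoc]
  gcongr
  rcases Nat.lt_or_ge k 2 with hk | hk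
  · have hk' : (k : ℝ) ≤ 1 := by exact_mod_cast Nat.le_of_lt_succ hk
    have hpow : (s : ℝ) ^ ((k : ℝ) - 1) ≤ 1 :=
      Real.rpow_le_one_of_one_le_of_nonpos hs' (by linarith)
    have hmul : (s : ℝ) ^ ((k : ℝ) - 1) * (1 - (s : ℝ)⁻¹) ≤ 1 :=
      mul_le_one₀ hpow (sub_nonneg.2 (inv_le_one_of_one_le₀ hs')) (by simp)
    exact (sub_nonpos.2 hmul).trans (Nat.cast_nonneg _)
  · obtain ⟨l, rfl⟩ := Nat.exists_eq_add_of_le' hk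
    have hpow : (s : ℝ) ^ (((l + 2 : ℕ) : ℝ) - 1) = s ^ l * s := by
      rw [← pow_succ, ← Real.rpow_natCast]
      push_cast
      ring_nf
    have hsub : ((s ^ (l + 2 - 1) - s ^ (l + 2 - 2) : ℕ) : ℝ) = s ^ l * s - s ^ l := by
      rw [Nat.cast_sub (Nat.pow_le_pow_right hs (by omega))]
      simp [pow_succ]
    rw [hpow, hsub, mul_sub, mul_one, mul_inv_cancel_right₀ (by positivity)]
    linarith

lemma log_div_log_sq (s x : ℝ) :
    Real.log x / Real.log (s ^ 2) = Real.logb s x / 2 := by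
  rw [Real.log_pow, Real.logb, div_div, mul_comm, Nat.cast_ofNat]

lemma log_div_log_sq_sub_half_le (hs : 1 < s) (hx : 0 < x) (h : x ≤ s ^ (k + 1)) :
    Real.log x / Real.log (s ^ 2) - 1 / 2 ≤ k / 2 := by
  have hlogb : Real.logb s x ≤ (k + 1 : ℕ) :=
    (Real.logb_le_iff_le_rpow hs hx).2 (by rwa [Real.rpow_natCast])
  rw [log_div_log_sq]
  push_cast at hlogb
  linarith

lemma half_le_log_div_log_sq_add_half (hs : 1 < s) (h : s ^ (k - 1) ≤ x) :
    (k : ℝ) / 2 ≤ Real.log x / Real.log (s ^ 2) + 1 / 2 := by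
  have hx : 0 < x := (by positivity : 0 < s ^ (k - 1)).trans_le h
  have hlogb : ((k - 1 : ℕ) : ℝ) ≤ Real.logb s x :=
    (Real.le_logb_iff_rpow_le hs hx).2 (by rwa [Real.rpow_natCast])
  have hk : (k : ℝ) ≤ (k - 1 : ℕ) + 1 := by exact_mod_cast Nat.le_succ_of_pred_le le_rfl
  rw [log_div_log_sq]
  linarith

end RealBounds

theorem stmt14_general (s ν : ℕ) (hs : 2 ≤ s) (m μ : ℕ) (hm : 2 ≤ m) (hmμ : m ≤ μ)
    (hμ : μ < s ^ (ν + 1)) :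
    sInf {y : ℝ | ∃ u : ℝ,
        Real.log ((m : ℝ) - 1) / Real.log ((s : ℝ) ^ 2) - 1 / 2 ≤ u ∧
        u ≤ Real.log ((μ : ℝ) - 1) / Real.log ((s : ℝ) ^ 2) + 1 / 2 ∧
        y = ((m : ℝ) - 1) * ((s : ℝ) ^ 2) ^ ((ν : ℝ) / 4 - u / 2) +
            ((s : ℝ) ^ 2) ^ (u - 1 / 2) * (1 - ((s : ℝ) ^ 2) ^ (-(1 : ℝ) / 2)) - 1}
      ≤ (Zval s ν μ m : ℝ) := by
  obtain ⟨I, hI, hcard, hZ⟩ := exists_ncard_add_HZ_diff_eq_Zval s ν hmμ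
  obtain ⟨d, hdI, hId⟩ := exists_neg_natCast_mem_subset_Ico hI
    (Set.nonempty_of_ncard_ne_zero (by omega))
  have hmd : m - 1 ≤ d := hcard ▸ ncard_le_of_subset_Ico_neg hId
  have hdμ : d ≤ μ - 1 := by have := (hI hdI).1; omega
  have hdlt : d < s ^ (ν + 1) := by omega
  obtain ⟨j, k, rfl, hlo, hhi⟩ := exists_pow_le_lt_pow hs (by omega) hdlt
  have hs' : (1 : ℝ) < s := Nat.one_lt_cast.2 hs
  have hcastm : ((m - 1 : ℕ) : ℝ) = m - 1 := Nat.cast_pred (by omega)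
  have hcastμ : ((μ - 1 : ℕ) : ℝ) = μ - 1 := Nat.cast_pred (by omega)
  rw [← hcastm, ← hcastμ, ← hZ]
  calc _ ≤ boundTerm s (2 * j + k) (m - 1 : ℕ) (k / 2) := by
        refine csInf_le ⟨-1, ?_⟩ ⟨k / 2, ?_, ?_, rfl⟩
        · rintro _ ⟨u, -, -, rfl⟩
          exact neg_one_le_boundTerm hs'.le (Nat.cast_nonneg _) _ u
        · exact log_div_log_sq_sub_half_le hs' (Nat.cast_pos.2 (by omega))
            (by exact_mod_cast hmd.trans hhi.le)
        · exact half_le_log_div_log_sq_add_half hs' (by exact_mod_cast hlo.trans hdμ)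
    _ ≤ (m - 1 : ℕ) * (s : ℝ) ^ j + (s ^ (k - 1) - s ^ (k - 2) : ℕ) :=
        boundTerm_half_le (by omega) _ j k
    _ ≤ _ := by exact_mod_cast hcard ▸ le_ncard_add_HZ_diff hs hId hdI hlo hhi j

/-- For `2 ≤ m ≤ μ < s^(ν+1) = q^((ν+1)/2)`, with `q = s^2`, one has
`Z(H, μ, m) ≥ min{(m-1)·q^(ν/4 - u/2) + q^(u - 1/2)(1 - q^(-1/2)) - 1 :
 log_q(m-1) - 1/2 ≤ u ≤ log_q(μ-1) + 1/2}`. -/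
theorem stmt14 (s ν : ℕ) (hs : 2 ≤ s) (hν : Even ν) (hν0 : 0 < ν)
    (m μ : ℕ) (hm : 2 ≤ m) (hmμ : m ≤ μ) (hμ : μ < s ^ (ν + 1)) :
    sInf {y : ℝ | ∃ u : ℝ,
        Real.log ((m : ℝ) - 1) / Real.log ((s : ℝ) ^ 2) - 1 / 2 ≤ u ∧
        u ≤ Real.log ((μ : ℝ) - 1) / Real.log ((s : ℝ) ^ 2) + 1 / 2 ∧
        y = ((m : ℝ) - 1) * ((s : ℝ) ^ 2) ^ ((ν : ℝ) / 4 - u / 2) +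
            ((s : ℝ) ^ 2) ^ (u - 1 / 2) * (1 - ((s : ℝ) ^ 2) ^ (-(1 : ℝ) / 2)) - 1}
      ≤ (Zval s ν μ m : ℝ) := by
  exact stmt14_general s ν hs m μ hm hmμ hμ
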